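/- Let Y ⊆ ℝ^m and X ⊆ ℝⁿ be open, let f : Y → X be continuously differentiable, and let Λ ⊆ X × ℝⁿ be a closed conic subset. In T*(Y × X) = (Y × X) × (ℝ^m × ℝⁿ) consider the closed conic subsets B = {(y, x; 0, η) : y ∈ Y, (x; η) ∈ Λ} and N = {(y, f(y); −f'(y)ᵀη, η) : y ∈ Y, η ∈ ℝⁿ} (the conormal bundle to the graph of f). Then {(y₀; ξ + f'(y₀)ᵀη) : (y₀, f(y₀); ξ, η) ∈ B +̂ N} = f^#(Λ), where f^#(Λ) is the set of (y₀; θ₀) ∈ Y × ℝ^m for which there exist a sequence (xₙ; ηₙ) in Λ and a sequence yₙ in Y with yₙ → y₀, xₙ → f(y₀), f'(yₙ)ᵀηₙ → θ₀ and |xₙ − f(yₙ)| |ηₙ| → 0. (This is the identity g_d g_π^{−1}(h_d h_π^{−1}(Λ) +̂ T*_Y(Y×X)) = f^#(Λ) established in the proof of Theorem 1.2 of the paper.) -/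

import Mathlib

open Filter Topology

/-- The operation `A +̂ B` on closed conic subsets of a cotangent space `W × ℝ^k`:
`(w₀; ζ₀) ∈ W × ℝ^k` belongs to `A +̂ B` iff there are sequences `(wₙ; ζₙ)` in `A` and
`(vₙ; ηₙ)` in `B` with `wₙ → w₀`, `vₙ → w₀`, `ζₙ + ηₙ → ζ₀` and `|wₙ - vₙ| |ζₙ| → 0`. -/
def hatSum {V : Type*} [NormedAddCommGroup V] (W : Set V) (A B : Set (V × V)) :
    Set (V × V) :=
  {p | p.1 ∈ W ∧ ∃ x ξ y η : ℕ → V,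
    (∀ n, (x n, ξ n) ∈ A) ∧ (∀ n, (y n, η n) ∈ B) ∧
    Tendsto x atTop (nhds p.1) ∧ Tendsto y atTop (nhds p.1) ∧
    Tendsto (fun n => ξ n + η n) atTop (nhds p.2) ∧
    Tendsto (fun n => ‖x n - y n‖ * ‖ξ n‖) atTop (nhds (0 : ℝ))}

/-- A subset of `X × ℝⁿ` is conic: stable under positive scalings of the covector. -/
def IsConic {V : Type*} [NormedAddCommGroup V] [NormedSpace ℝ V] (A : Set (V × V)) : Prop :=
  ∀ p ∈ A, ∀ lam : ℝ, 0 < lam → (p.1, lam • p.2) ∈ A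

/-- `f^#(Λ)`: the set of `(y₀; θ₀) ∈ Y × ℝ^m` for which there are a sequence `(xₙ; ηₙ)`
in `Λ` and a sequence `yₙ` in `Y` with `yₙ → y₀`, `xₙ → f(y₀)`, `f'(yₙ)ᵀ ηₙ → θ₀` and
`|xₙ - f(yₙ)| |ηₙ| → 0`. -/
def fSharp {m n : ℕ} (Y : Set (EuclideanSpace ℝ (Fin m)))
    (f : EuclideanSpace ℝ (Fin m) → EuclideanSpace ℝ (Fin n))
    (f' : EuclideanSpace ℝ (Fin m) → (EuclideanSpace ℝ (Fin m) →L[ℝ] EuclideanSpace ℝ (Fin n)))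
    (Λ : Set (EuclideanSpace ℝ (Fin n) × EuclideanSpace ℝ (Fin n))) :
    Set (EuclideanSpace ℝ (Fin m) × EuclideanSpace ℝ (Fin m)) :=
  {q | q.1 ∈ Y ∧
    ∃ (x η : ℕ → EuclideanSpace ℝ (Fin n)) (y : ℕ → EuclideanSpace ℝ (Fin m)),
      (∀ k, (x k, η k) ∈ Λ) ∧ (∀ k, y k ∈ Y) ∧
      Tendsto y atTop (nhds q.1) ∧ Tendsto x atTop (nhds (f q.1)) ∧
      Tendsto (fun k => ContinuousLinearMap.adjoint (f' (y k)) (η k)) atTop (nhds q.2) ∧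
      Tendsto (fun k => ‖x k - f (y k)‖ * ‖η k‖) atTop (nhds (0 : ℝ))}

/-- `h_d h_π^{-1}(Λ) = {(y, x; 0, η) : y ∈ Y, (x; η) ∈ Λ}` in `T*(Y × X)`. -/
def setB {m n : ℕ} (Y : Set (EuclideanSpace ℝ (Fin m)))
    (Λ : Set (EuclideanSpace ℝ (Fin n) × EuclideanSpace ℝ (Fin n))) :
    Set ((EuclideanSpace ℝ (Fin m) × EuclideanSpace ℝ (Fin n)) ×
      (EuclideanSpace ℝ (Fin m) × EuclideanSpace ℝ (Fin n))) :=
  {p | p.1.1 ∈ Y ∧ (p.1.2, p.2.2) ∈ Λ ∧ p.2.1 = 0}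

/-- `T*_Y(Y × X) = {(y, f(y); -f'(y)ᵀ η, η) : y ∈ Y, η ∈ ℝⁿ}`, the conormal bundle to the
graph of `f`. -/
def setN {m n : ℕ} (Y : Set (EuclideanSpace ℝ (Fin m)))
    (f : EuclideanSpace ℝ (Fin m) → EuclideanSpace ℝ (Fin n))
    (f' : EuclideanSpace ℝ (Fin m) → (EuclideanSpace ℝ (Fin m) →L[ℝ] EuclideanSpace ℝ (Fin n))) :
    Set ((EuclideanSpace ℝ (Fin m) × EuclideanSpace ℝ (Fin n)) ×
      (EuclideanSpace ℝ (Fin m) × EuclideanSpace ℝ (Fin n))) :=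
  {p | p.1.1 ∈ Y ∧ p.1.2 = f p.1.1 ∧
    p.2.1 = -(ContinuousLinearMap.adjoint (f' p.1.1) p.2.2)}

/-!
For `(y, x; 0, a) ∈ B` and `(z, f z; -f'(z)ᵀ b, b) ∈ N` the covectors add up to
`(ξ, η) = (-f'(z)ᵀ b, a + b)`, so that `f'(z)ᵀ a = ξ + f'(z)ᵀ η`: the possibly divergent `b`
cancels. Along sequences, `ξ` and `η` converge and `f'` is continuous, hence limits in `B +̂ N`
yield limits defining `f^#(Λ)`. Conversely, `b = -a` makes `η` vanish and lifts `(y₀; θ₀) ∈ f^#(Λ)`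
to `(y₀, f y₀; θ₀, 0) ∈ B +̂ N`.
-/

theorem continuous_adjoint_apply {𝕜 E F : Type*} [RCLike 𝕜]
    [NormedAddCommGroup E] [InnerProductSpace 𝕜 E] [CompleteSpace E]
    [NormedAddCommGroup F] [InnerProductSpace 𝕜 F] [CompleteSpace F] :
    Continuous fun p : (E →L[𝕜] F) × F => ContinuousLinearMap.adjoint p.1 p.2 :=
  (ContinuousLinearMap.adjoint.continuous.comp continuous_fst).clm_apply continuous_snd

section

variable {m n : ℕ} {Y : Set (EuclideanSpace ℝ (Fin m))} {X : Set (EuclideanSpace ℝ (Fin n))}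
  {f : EuclideanSpace ℝ (Fin m) → EuclideanSpace ℝ (Fin n)}
  {f' : EuclideanSpace ℝ (Fin m) → (EuclideanSpace ℝ (Fin m) →L[ℝ] EuclideanSpace ℝ (Fin n))}
  {Λ : Set (EuclideanSpace ℝ (Fin n) × EuclideanSpace ℝ (Fin n))}
  {w a v b : EuclideanSpace ℝ (Fin m) × EuclideanSpace ℝ (Fin n)}

theorem fst_add_adjoint_snd_add_of_mem_setB_of_mem_setN
    (hwa : (w, a) ∈ setB Y Λ) (hvb : (v, b) ∈ setN Y f f') :
    (a + b).1 + ContinuousLinearMap.adjoint (f' v.1) (a + b).2 =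
      ContinuousLinearMap.adjoint (f' v.1) a.2 := by
  have ha : a.1 = 0 := hwa.2.2
  have hb : b.1 = -ContinuousLinearMap.adjoint (f' v.1) b.2 := hvb.2.2
  rw [Prod.fst_add, Prod.snd_add, ha, hb, map_add]
  abel

theorem norm_snd_sub_apply_mul_norm_snd_le_of_mem_setN (hvb : (v, b) ∈ setN Y f f') :
    ‖w.2 - f v.1‖ * ‖a.2‖ ≤ ‖w - v‖ * ‖a‖ := by
  have hv : v.2 = f v.1 := hvb.2.1
  rw [← hv]
  gcongr
  exacts [norm_snd_le (w - v), norm_snd_le a]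

theorem mk_adjoint_neg_mem_setN {y : EuclideanSpace ℝ (Fin m)} (hy : y ∈ Y)
    (η : EuclideanSpace ℝ (Fin n)) :
    ((y, f y), (ContinuousLinearMap.adjoint (f' y) η, -η)) ∈ setN Y f f' :=
  ⟨hy, rfl, by simp⟩

theorem mk_add_adjoint_mem_fSharp_of_mem_hatSum {y₀ ξ : EuclideanSpace ℝ (Fin m)}
    {η : EuclideanSpace ℝ (Fin n)} (hf' : ContinuousWithinAt f' Y y₀)
    (h : ((y₀, f y₀), (ξ, η)) ∈ hatSum (Y ×ˢ X) (setB Y Λ) (setN Y f f')) :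
    (y₀, ξ + ContinuousLinearMap.adjoint (f' y₀) η) ∈ fSharp Y f f' Λ := by
  obtain ⟨⟨hy₀, -⟩, w, a, v, b, hwa, hvb, hw, hv, hab, hsmall⟩ := h
  have hvY : ∀ k, (v k).1 ∈ Y := fun k => (hvb k).1
  have hv_fst : Tendsto (fun k => (v k).1) atTop (𝓝 y₀) := hv.fst_nhds
  have hf'v : Tendsto (fun k => f' (v k).1) atTop (𝓝 (f' y₀)) :=
    hf'.tendsto.comp (tendsto_nhdsWithin_iff.2 ⟨hv_fst, .of_forall hvY⟩)
  have hξ : Tendsto (fun k => (a k + b k).1) atTop (𝓝 ξ) := hab.fst_nhds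
  have hη : Tendsto (fun k => (a k + b k).2) atTop (𝓝 η) := hab.snd_nhds
  have hadj : Tendsto (fun k => ContinuousLinearMap.adjoint (f' (v k).1) (a k + b k).2) atTop
      (𝓝 (ContinuousLinearMap.adjoint (f' y₀) η)) := by
    simpa only [Function.comp_def] using
      (continuous_adjoint_apply.tendsto (f' y₀, η)).comp (hf'v.prodMk_nhds hη)
  refine ⟨hy₀, fun k => (w k).2, fun k => (a k).2, fun k => (v k).1,
    fun k => (hwa k).2.1, hvY, hv_fst, hw.snd_nhds, ?_, ?_⟩
  · exact (hξ.add hadj).congr fun k =>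
      fst_add_adjoint_snd_add_of_mem_setB_of_mem_setN (hwa k) (hvb k)
  · exact squeeze_zero (fun k => by positivity)
      (fun k => norm_snd_sub_apply_mul_norm_snd_le_of_mem_setN (hvb k)) hsmall

theorem mk_zero_mem_hatSum_of_mem_fSharp {y₀ θ₀ : EuclideanSpace ℝ (Fin m)}
    (hfX : f y₀ ∈ X) (hf : ContinuousWithinAt f Y y₀) (h : (y₀, θ₀) ∈ fSharp Y f f' Λ) :
    ((y₀, f y₀), (θ₀, 0)) ∈ hatSum (Y ×ˢ X) (setB Y Λ) (setN Y f f') := by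
  obtain ⟨hy₀, x, η, y, hxη, hyY, hy, hx, hθ, hsmall⟩ := h
  have hfy : Tendsto (fun k => f (y k)) atTop (𝓝 (f y₀)) :=
    hf.tendsto.comp (tendsto_nhdsWithin_iff.2 ⟨hy, .of_forall hyY⟩)
  refine ⟨⟨hy₀, hfX⟩, fun k => (y k, x k), fun k => (0, η k), fun k => (y k, f (y k)),
    fun k => (ContinuousLinearMap.adjoint (f' (y k)) (η k), -η k),
    fun k => ⟨hyY k, hxη k, rfl⟩, fun k => mk_adjoint_neg_mem_setN (hyY k) (η k),
    hy.prodMk_nhds hx, hy.prodMk_nhds hfy, ?_, ?_⟩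
  · simpa using hθ.prodMk_nhds (tendsto_const_nhds (x := (0 : EuclideanSpace ℝ (Fin n))))
  · simpa [Prod.norm_def] using hsmall

theorem stmt6_general (hfX : ∀ y ∈ Y, f y ∈ X)
    (hf' : ∀ y ∈ Y, HasFDerivWithinAt f (f' y) Y y) (hf'cont : ContinuousOn f' Y) :
    {q : EuclideanSpace ℝ (Fin m) × EuclideanSpace ℝ (Fin m) | q.1 ∈ Y ∧
      ∃ ξ : EuclideanSpace ℝ (Fin m), ∃ η : EuclideanSpace ℝ (Fin n),
        ((q.1, f q.1), (ξ, η)) ∈ hatSum (Y ×ˢ X) (setB Y Λ) (setN Y f f') ∧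
        q.2 = ξ + ContinuousLinearMap.adjoint (f' q.1) η}
    = fSharp Y f f' Λ := by
  ext ⟨y₀, θ₀⟩
  constructor
  · rintro ⟨hy₀, ξ, η, hsum, hθ₀ : θ₀ = ξ + ContinuousLinearMap.adjoint (f' y₀) η⟩
    rw [hθ₀]
    exact mk_add_adjoint_mem_fSharp_of_mem_hatSum (hf'cont y₀ hy₀) hsum
  · intro hθ₀
    have hy₀ : y₀ ∈ Y := hθ₀.1
    exact ⟨hy₀, θ₀, 0, mk_zero_mem_hatSum_of_mem_fSharp (hfX y₀ hy₀)
      (hf' y₀ hy₀).continuousWithinAt hθ₀, by simp⟩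

end

/-- The identity `g_d g_π^{-1}(h_d h_π^{-1}(Λ) +̂ T*_Y(Y × X)) = f^#(Λ)` from the proof of
Theorem 1.2: for a C¹ map `f : Y → X` and a closed conic `Λ ⊆ X × ℝⁿ`,
`{(y₀; ξ + f'(y₀)ᵀ η) : (y₀, f(y₀); ξ, η) ∈ B +̂ N} = f^#(Λ)`. -/
theorem stmt6 {m n : ℕ}
    (Y : Set (EuclideanSpace ℝ (Fin m))) (hY : IsOpen Y)
    (X : Set (EuclideanSpace ℝ (Fin n))) (hX : IsOpen X)
    (f : EuclideanSpace ℝ (Fin m) → EuclideanSpace ℝ (Fin n))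
    (hfX : ∀ y ∈ Y, f y ∈ X)
    (f' : EuclideanSpace ℝ (Fin m) → (EuclideanSpace ℝ (Fin m) →L[ℝ] EuclideanSpace ℝ (Fin n)))
    (hf' : ∀ y ∈ Y, HasFDerivAt f (f' y) y)
    (hf'cont : ContinuousOn f' Y)
    (Λ : Set (EuclideanSpace ℝ (Fin n) × EuclideanSpace ℝ (Fin n)))
    (hΛX : ∀ p ∈ Λ, p.1 ∈ X)
    (hΛclosed : closure Λ ∩ {p : EuclideanSpace ℝ (Fin n) × EuclideanSpace ℝ (Fin n) |
      p.1 ∈ X} ⊆ Λ)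
    (hΛconic : IsConic Λ) :
    {q : EuclideanSpace ℝ (Fin m) × EuclideanSpace ℝ (Fin m) | q.1 ∈ Y ∧
      ∃ ξ : EuclideanSpace ℝ (Fin m), ∃ η : EuclideanSpace ℝ (Fin n),
        ((q.1, f q.1), (ξ, η)) ∈ hatSum (Y ×ˢ X) (setB Y Λ) (setN Y f f') ∧
        q.2 = ξ + ContinuousLinearMap.adjoint (f' q.1) η}
    = fSharp Y f f' Λ :=
  stmt6_general hfX (fun y hy => (hf' y hy).hasFDerivWithinAt) hf'cont
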